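/- arXiv:math/0602568 — 4 statements merged into one kernel-verified Lean document; each statement's English description precedes it below -/
import Mathlib

section
/- Every zero-free sequence of length greater than n/2 in the cyclic group Z/nZ is behaving with respect to one of its terms: there is a term a of the sequence and positive integers s_1,...,s_ℓ with s_1 + ... + s_ℓ < ord(a) such that the sequence equals (s_1·a, ..., s_ℓ·a) up to reordering and (s_1,...,s_ℓ) has sumset {1,2,...,s_1+...+s_ℓ}. -/
/-- A list in an additive commutative group is zero-free if no nonempty
sublist sums to zero. -/
def ZeroFree {G : Type*} [AddCommGroup G] (l : List G) : Prop :=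
  ∀ t : List G, t.Sublist l → t ≠ [] → t.sum ≠ 0

/-- The sumset of a list: all sums of nonempty sublists. -/
def sumset {G : Type*} [AddCommGroup G] (l : List G) : Set G :=
  {x | ∃ t : List G, t.Sublist l ∧ t ≠ [] ∧ t.sum = x}

/-- The sumset of a list of natural numbers: all sums of nonempty sublists. -/
def sumsetN (l : List ℕ) : Set ℕ :=
  {x | ∃ t : List ℕ, t.Sublist l ∧ t ≠ [] ∧ t.sum = x}

theorem le_map_aux {A B : Type*} (f : A → B) (s : Multiset A) (t : Multiset B)
    (h : t ≤ s.map f) : ∃ u ≤ s, u.map f = t := by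
  induction s using Quotient.inductionOn with
  | h s =>
    induction t using Quotient.inductionOn with
    | h t =>
      obtain ⟨l, hp, hl⟩ := Multiset.coe_le.1 h
      obtain ⟨u, hu, rfl⟩ := List.sublist_map_iff.1 hl
      exact ⟨u, Multiset.coe_le.2 hu.subperm, by simpa using hp⟩

section aux

variable {G : Type*} [AddCommGroup G] [DecidableEq G]

/-- All subsequence sums (including the empty one). -/
def SS (m : Multiset G) : Finset G := (m.powerset.map Multiset.sum).toFinset

theorem mem_SS {m : Multiset G} {x : G} : x ∈ SS m ↔ ∃ t ≤ m, t.sum = x := by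
  simp [SS]

/-- Zero-free multisets. -/
def ZF (m : Multiset G) : Prop := ∀ t ≤ m, t ≠ 0 → t.sum ≠ 0

theorem SS_cons (b : G) (m : Multiset G) :
    SS (b ::ₘ m) = SS m ∪ (SS m).image (fun x => x + b) := by
  ext x
  simp only [Finset.mem_union, Finset.mem_image, mem_SS]
  constructor
  · rintro ⟨t, ht, rfl⟩
    by_cases hb : b ∈ t
    · right
      obtain ⟨u, rfl⟩ := Multiset.exists_cons_of_mem hb
      refine ⟨u.sum, ⟨u, (Multiset.cons_le_cons_iff b).1 ht, rfl⟩, ?_⟩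
      rw [Multiset.sum_cons, add_comm]
    · left
      exact ⟨t, (Multiset.le_cons_of_notMem hb).1 ht, rfl⟩
  · rintro (⟨t, ht, rfl⟩ | ⟨_, ⟨t, ht, rfl⟩, rfl⟩)
    · exact ⟨t, ht.trans (Multiset.le_cons_self _ _), rfl⟩
    · exact ⟨b ::ₘ t, (Multiset.cons_le_cons_iff b).2 ht, by rw [Multiset.sum_cons, add_comm]⟩

theorem ZF.neg_notMem {b : G} {m : Multiset G} (h : ZF (b ::ₘ m)) : -b ∉ SS m := by
  rw [mem_SS]
  rintro ⟨t, ht, hs⟩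
  exact h (b ::ₘ t) ((Multiset.cons_le_cons_iff b).2 ht) (Multiset.cons_ne_zero)
    (by rw [Multiset.sum_cons, hs]; abel)

theorem ZF.sum_notMem {b : G} {m : Multiset G} (h : ZF (b ::ₘ m)) :
    (b ::ₘ m).sum ∉ SS m := by
  rw [mem_SS]
  rintro ⟨t, ht, hs⟩
  obtain ⟨u, rfl⟩ := Multiset.le_iff_exists_add.1 ht
  refine h (b ::ₘ u) ((Multiset.cons_le_cons_iff b).2 (Multiset.le_add_left _ _))
    (Multiset.cons_ne_zero) ?_
  simp only [Multiset.sum_cons, Multiset.sum_add] at hs ⊢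
  have : t.sum + (b + u.sum) = t.sum + 0 := by rw [add_zero]; nth_rw 2 [hs]; abel
  exact add_left_cancel this

theorem drop_one {b : G} {m : Multiset G} (h : ZF (b ::ₘ m))
    (hc : (SS (b ::ₘ m)).card ≤ (SS m).card + 1) :
    SS m = (SS (b ::ₘ m)).erase (b ::ₘ m).sum ∧
    (SS m).image (fun x => x + b) = (SS (b ::ₘ m)).erase 0 := by
  have h0 : (0 : G) ∈ SS (b ::ₘ m) := mem_SS.2 ⟨0, Multiset.zero_le _, rfl⟩
  have h1 : (b ::ₘ m).sum ∈ SS (b ::ₘ m) := mem_SS.2 ⟨_, le_rfl, rfl⟩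
  constructor
  · apply Finset.eq_of_subset_of_card_le
    · intro x hx
      rw [Finset.mem_erase]
      refine ⟨?_, by rw [SS_cons]; exact Finset.mem_union_left _ hx⟩
      rintro rfl
      exact h.sum_notMem hx
    · rw [Finset.card_erase_of_mem h1]; omega
  · apply Finset.eq_of_subset_of_card_le
    · intro x hx
      rw [Finset.mem_erase]
      refine ⟨?_, by rw [SS_cons]; exact Finset.mem_union_right _ hx⟩
      rintro rfl
      obtain ⟨y, hy, hyb⟩ := Finset.mem_image.1 hx
      exact h.neg_notMem (by rwa [← eq_neg_of_add_eq_zero_left hyb])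
    · rw [Finset.card_erase_of_mem h0, Finset.card_image_of_injective _ (add_left_injective b)]
      omega

theorem main_aux [Finite G] (k : ℕ) : ∀ m : Multiset G, Multiset.card m = k → ZF m →
    (SS m).card + 1 ≤ 2 * k →
    ∃ a ∈ m, ∃ s : Multiset ℕ, (∀ x ∈ s, 0 < x) ∧ s.sum < addOrderOf a ∧
      m = s.map (fun i => i • a) ∧ ∀ x ≤ s.sum, ∃ t ≤ s, t.sum = x := by
  induction k with
  | zero => intro m _ _ h; omega
  | succ k ih =>
    intro m hm hz hc
    by_cases hb : ∃ b m', m = b ::ₘ m' ∧ (SS m').card + 2 ≤ (SS m).card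
    · obtain ⟨b, m', rfl, hcard⟩ := hb
      have hm' : Multiset.card m' = k := by simpa using hm
      have hz' : ZF m' := fun t ht => hz t (ht.trans (Multiset.le_cons_self _ _))
      obtain ⟨a, ha, s, hpos, hlt, hmap, hsum⟩ := ih m' hm' hz' (by omega)
      have hmem : ∀ i ≤ s.sum, i • a ∈ SS m' := by
        intro i hi
        obtain ⟨t, ht, rfl⟩ := hsum i hi
        rw [mem_SS, hmap]
        exact ⟨t.map (fun i => i • a), Multiset.map_le_map ht,
          (Multiset.sum_smul ).symm⟩
      have hks : k ≤ s.sum := by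
        have h1 : Multiset.card s • 1 ≤ s.sum :=
          Multiset.card_nsmul_le_sum (fun x hx => hpos x hx)
        have h2 : Multiset.card s = k := by rw [← hm', hmap, Multiset.card_map]
        simpa [h2] using h1
      have hcS : s.sum + 1 ≤ (SS m').card := by
        have : ((Finset.range (s.sum + 1)).image (fun i => i • a)).card ≤ (SS m').card := by
          apply Finset.card_le_card
          intro x hx
          obtain ⟨i, hi, rfl⟩ := Finset.mem_image.1 hx
          exact hmem i (by simpa [Nat.lt_succ_iff] using hi)
        rw [Finset.card_image_of_injOn, Finset.card_range] at this
        · exact this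
        · intro i hi j hj hij
          simp only [Finset.coe_range, Set.mem_Iio] at hi hj
          exact nsmul_injOn_Iio_addOrderOf (by simp; omega) (by simp; omega) hij
      have hSeq : ∀ x ∈ SS m', ∃ i ≤ s.sum, i • a = x := by
        intro x hx
        obtain ⟨t, ht, rfl⟩ := mem_SS.1 hx
        rw [hmap] at ht
        obtain ⟨u, hu, rfl⟩ := le_map_aux _ _ _ ht
        obtain ⟨v, rfl⟩ := Multiset.le_iff_exists_add.1 hu
        exact ⟨u.sum, by simp, Multiset.sum_smul ⟩
      have hnd : ¬ Disjoint (SS m') ((SS m').image (fun x => x + b)) := by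
        intro hd
        have := Finset.card_union_of_disjoint hd
        rw [← SS_cons, Finset.card_image_of_injective _ (add_left_injective b)] at this
        omega
      obtain ⟨x, hx1, hx2⟩ := Finset.not_disjoint_iff.1 hnd
      obtain ⟨y, hy, hyx⟩ := Finset.mem_image.1 hx2
      obtain ⟨i, hi, rfl⟩ := hSeq x hx1
      obtain ⟨j, hj, rfl⟩ := hSeq y hy
      have hji : j < i := by
        by_contra! hle
        obtain ⟨d, rfl⟩ := Nat.exists_eq_add_of_le hle
        refine hz.neg_notMem ?_
        have : -b = d • a := by
          simp only [add_nsmul] at hyx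
          have : i • a + (d • a + b) = i • a + 0 := by rw [add_zero, ← add_assoc]; exact hyx
          exact (eq_neg_of_add_eq_zero_left (add_left_cancel this)).symm
        rw [this]
        exact hmem d (by omega)
      obtain ⟨t, rfl⟩ := Nat.exists_eq_add_of_lt hji
      have hbt : b = (t + 1) • a := by
        simp only [add_assoc] at hyx
        rw [add_nsmul] at hyx
        exact add_left_cancel hyx
      refine ⟨a, Multiset.mem_cons_of_mem ha, (t + 1) ::ₘ s, ?_, ?_, ?_, ?_⟩
      · intro x hx
        rcases Multiset.mem_cons.1 hx with rfl | hx
        · omega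
        · exact hpos x hx
      · rw [Multiset.sum_cons]
        by_contra! hle
        refine hz.neg_notMem ?_
        have : -b = (addOrderOf a - (t + 1)) • a := by
          rw [neg_eq_iff_add_eq_zero, hbt, ← add_nsmul]
          have : t + 1 + (addOrderOf a - (t + 1)) = addOrderOf a := by omega
          rw [this, addOrderOf_nsmul_eq_zero]
        rw [this]
        exact hmem _ (by omega)
      · rw [Multiset.map_cons, ← hmap, hbt]
      · intro x hx
        rw [Multiset.sum_cons] at hx
        by_cases hxs : x ≤ s.sum
        · obtain ⟨u, hu, hux⟩ := hsum x hxs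
          exact ⟨u, hu.trans (Multiset.le_cons_self _ _), hux⟩
        · obtain ⟨u, hu, hux⟩ := hsum (x - (t + 1)) (by omega)
          refine ⟨(t + 1) ::ₘ u, (Multiset.cons_le_cons_iff _).2 hu, ?_⟩
          rw [Multiset.sum_cons]; omega
    · push Not at hb
      have hd : ∀ b m', m = b ::ₘ m' → SS m' = (SS m).erase m.sum ∧
          (SS m').image (fun x => x + b) = (SS m).erase 0 := by
        intro b m' h
        have h2 := hb b m' h
        subst h
        exact drop_one hz (by omega)
      obtain ⟨a, ha⟩ := Multiset.card_pos_iff_exists_mem.1 (by omega : 0 < Multiset.card m)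
      obtain ⟨ma, hma⟩ := Multiset.exists_cons_of_mem ha
      obtain ⟨ha1, ha2⟩ := hd a ma hma
      have hall : ∀ b ∈ m, b = a := by
        intro b hbm
        obtain ⟨mb, hmb⟩ := Multiset.exists_cons_of_mem hbm
        obtain ⟨hb1, hb2⟩ := hd b mb hmb
        by_contra hne
        have h1 : b ∈ (SS m).erase 0 := by
          rw [← hb2]
          exact Finset.mem_image.2 ⟨0, mem_SS.2 ⟨0, Multiset.zero_le _, rfl⟩, zero_add _⟩
        rw [← ha2] at h1
        obtain ⟨y, hy, hyb⟩ := Finset.mem_image.1 h1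
        have hy0 : y ≠ 0 := by
          rintro rfl
          exact hne (by simpa using hyb.symm)
        have h2 : y ∈ (SS m).erase 0 := by
          rw [Finset.mem_erase]
          refine ⟨hy0, ?_⟩
          rw [ha1] at hy
          exact Finset.mem_of_mem_erase hy
        rw [← hb2] at h2
        obtain ⟨z, hz1, hzy⟩ := Finset.mem_image.1 h2
        rw [hb1, ← ha1] at hz1
        rw [hma] at hz
        apply hz.neg_notMem
        have : z = -a := by
          have : b + (z + a) = b + 0 := by
            rw [add_zero]; nth_rw 2 [← hyb]; rw [← hzy]; abel
          exact eq_neg_of_add_eq_zero_left (add_left_cancel this)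
        rwa [← this]
      have hrep : m = Multiset.replicate (k + 1) a := Multiset.eq_replicate.2 ⟨hm, hall⟩
      refine ⟨a, ha, Multiset.replicate (k + 1) 1, ?_, ?_, ?_, ?_⟩
      · intro x hx
        rw [Multiset.eq_of_mem_replicate hx]; exact one_pos
      · simp only [Multiset.sum_replicate, smul_eq_mul, mul_one]
        by_contra! hle
        refine hz (Multiset.replicate (addOrderOf a) a) ?_ ?_ ?_
        · rw [hrep]; exact Multiset.replicate_mono a hle
        · intro h
          have h3 := congrArg Multiset.card h
          have := addOrderOf_pos a
          rw [Multiset.card_replicate, Multiset.card_zero] at h3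
          omega
        · rw [Multiset.sum_replicate, addOrderOf_nsmul_eq_zero]
      · rw [Multiset.map_replicate, one_nsmul]; exact hrep
      · intro x hx
        simp only [Multiset.sum_replicate, smul_eq_mul, mul_one] at hx
        exact ⟨Multiset.replicate x 1, Multiset.replicate_mono 1 hx, by simp⟩

end aux

theorem stmt9 (n : ℕ) (hn : 1 < n) (α : List (ZMod n)) (hlen : n < 2 * α.length)
    (hzf : ZeroFree α) :
    ∃ a ∈ α, ∃ s : List ℕ, (∀ x ∈ s, 0 < x) ∧ s.sum < addOrderOf a ∧
      α.Perm (s.map (fun m => m • a)) ∧ sumsetN s = Set.Icc 1 s.sum := by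
  have : NeZero n := ⟨by omega⟩
  have hz : ZF (α : Multiset (ZMod n)) := by
    intro t ht h0 hs
    induction t using Quotient.inductionOn with
    | h l =>
      obtain ⟨l', hp, hl⟩ := Multiset.coe_le.1 ht
      refine hzf l' hl ?_ ?_
      · rintro rfl
        exact h0 (by simpa using hp.symm)
      · rw [hp.sum_eq]; simpa using hs
  have hcard : (SS (α : Multiset (ZMod n))).card ≤ n := by
    simpa [ZMod.card] using Finset.card_le_univ (SS (α : Multiset (ZMod n)))
  obtain ⟨a, ha, s, hpos, hlt, hmap, hsum⟩ :=
    main_aux α.length (α : Multiset (ZMod n)) (by simp) hz (by omega)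
  induction s using Quotient.inductionOn with
  | h s =>
    simp only [Multiset.quot_mk_to_coe, Multiset.sum_coe, Multiset.mem_coe, Multiset.map_coe,
      Multiset.coe_eq_coe] at *
    refine ⟨a, ha, s, hpos, hlt, hmap, ?_⟩
    ext x
    simp only [sumsetN, Set.mem_ofPred_eq, Set.mem_Icc]
    constructor
    · rintro ⟨t, ht, hne, rfl⟩
      refine ⟨?_, ht.sum_le_sum (by simp)⟩
      obtain ⟨y, hy⟩ := List.exists_mem_of_ne_nil t hne
      exact (hpos y (ht.subset hy)).trans_le (List.single_le_sum (by simp) y hy)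
    · rintro ⟨h1, h2⟩
      obtain ⟨t, ht, rfl⟩ := hsum x h2
      induction t using Quotient.inductionOn with
      | h l =>
        obtain ⟨l', hp, hl⟩ := Multiset.coe_le.1 ht
        have he : l'.sum = l.sum := hp.sum_eq
        simp only [Multiset.quot_mk_to_coe, Multiset.sum_coe] at h1 ⊢
        refine ⟨l', hl, ?_, he⟩
        rintro rfl
        simp at he
        omega
end

section
/- Let n > 1 and let α = (a_1,...,a_ℓ) be a zero-free sequence in Z/nZ of length ℓ > n/2. Then there exists an integer g coprime to n such that the sum of the least positive representatives of g·a_1, ..., g·a_ℓ is less than n; i.e., Index(α) < n. -/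
/-- The least positive representative of a residue class mod n:
the unique integer in {1, ..., n} congruent to it. -/
def lpr (n : ℕ) (a : ZMod n) : ℕ := if a = 0 then n else a.val

section Helpers

variable {G : Type*} [AddCommGroup G]

/-- multiset version of zero-freeness -/
def ZFm (s : Multiset G) : Prop := ∀ t ≤ s, t ≠ 0 → t.sum ≠ 0

open Classical in
/-- all subsums, including the empty one -/
noncomputable def subs (s : Multiset G) : Finset G :=
  (s.powerset.map Multiset.sum).toFinset

theorem mem_subs {s : Multiset G} {x : G} : x ∈ subs s ↔ ∃ t ≤ s, t.sum = x := by
  simp [subs]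

theorem ZFm.mono {s t : Multiset G} (h : ZFm t) (hst : s ≤ t) : ZFm s :=
  fun u hu hne => h u (hu.trans hst) hne

theorem mem_subs_add {s t : Multiset G} {x : G} :
    x ∈ subs (s + t) ↔ ∃ y ∈ subs s, ∃ z ∈ subs t, y + z = x := by
  classical
  constructor
  · intro h
    obtain ⟨u, hu, rfl⟩ := mem_subs.1 h
    refine ⟨(u ∩ s).sum, mem_subs.2 ⟨_, Multiset.inter_le_right, rfl⟩, (u - s).sum,
      mem_subs.2 ⟨_, ?_, rfl⟩, ?_⟩
    · rwa [tsub_le_iff_left]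
    · rw [← Multiset.sum_add, add_comm, Multiset.sub_add_inter]
  · rintro ⟨y, hy, z, hz, rfl⟩
    obtain ⟨u, hu, rfl⟩ := mem_subs.1 hy
    obtain ⟨v, hv, rfl⟩ := mem_subs.1 hz
    exact mem_subs.2 ⟨u + v, add_le_add hu hv, by simp⟩

theorem zero_mem_subs (s : Multiset G) : (0 : G) ∈ subs s :=
  mem_subs.2 ⟨0, Multiset.zero_le _, by simp⟩

theorem subs_mono {s t : Multiset G} (h : s ≤ t) : subs s ⊆ subs t := by
  intro x hx
  obtain ⟨u, hu, rfl⟩ := mem_subs.1 hx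
  exact mem_subs.2 ⟨u, hu.trans h, rfl⟩

theorem sum_mem_subs (s : Multiset G) : s.sum ∈ subs s := mem_subs.2 ⟨s, le_rfl, rfl⟩

theorem mem_subs_singleton {g x : G} : x ∈ subs ({g} : Multiset G) ↔ x = 0 ∨ x = g := by
  rw [mem_subs]
  constructor
  · rintro ⟨t, ht, rfl⟩
    rcases Multiset.le_singleton.1 ht with rfl | rfl <;> simp
  · rintro (rfl | rfl)
    · exact ⟨0, Multiset.zero_le _, by simp⟩
    · exact ⟨{x}, le_rfl, by simp⟩

theorem mem_subs_replicate {g x : G} {c : ℕ} :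
    x ∈ subs (Multiset.replicate c g) ↔ ∃ i ≤ c, x = i • g := by
  rw [mem_subs]
  constructor
  · rintro ⟨t, ht, rfl⟩
    obtain ⟨i, hi, rfl⟩ := Multiset.le_replicate_iff.1 ht
    exact ⟨i, hi, by simp⟩
  · rintro ⟨i, hi, rfl⟩
    exact ⟨Multiset.replicate i g, Multiset.replicate_mono _ hi, by simp⟩

theorem subs_symm {s : Multiset G} {x : G} (h : x ∈ subs s) : s.sum - x ∈ subs s := by
  classical
  obtain ⟨u, hu, rfl⟩ := mem_subs.1 h
  refine mem_subs.2 ⟨s - u, tsub_le_self, ?_⟩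
  have := congrArg Multiset.sum (tsub_add_cancel_of_le hu)
  rw [Multiset.sum_add] at this
  rw [← this]; abel

theorem neg_notMem {s : Multiset G} {g : G} (h : ZFm (s + {g})) : -g ∉ subs s := by
  intro hx
  obtain ⟨u, hu, hs⟩ := mem_subs.1 hx
  exact h (u + {g}) (by gcongr) (by simp) (by simp [hs])

theorem sum_notMem {s : Multiset G} {g : G} (h : ZFm (s + {g})) : s.sum + g ∉ subs s := by
  intro hx
  have := subs_symm hx
  apply neg_notMem h
  simpa using this

/-- β behaves like integers with respect to a -/
def Beh (a : G) (β : Multiset G) : Prop :=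
  ∃ m : Multiset ℕ, (∀ x ∈ m, 1 ≤ x) ∧ β = m.map (fun x => x • a) ∧ m.sum < addOrderOf a ∧
    ∀ x, x ∈ subs β ↔ ∃ j ≤ m.sum, x = j • a

theorem card_le_sum_nat (m : Multiset ℕ) (h : ∀ x ∈ m, 1 ≤ x) : m.card ≤ m.sum := by
  induction m using Multiset.induction_on with
  | empty => simp
  | cons x m ih =>
    have h1 := h x (by simp)
    have h2 := ih (fun y hy => h y (by simp [hy]))
    simp; omega

theorem step_one {a g : G} {β : Multiset G} (hz : ZFm (β + {g})) (hb : Beh a β)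
    (hnb : ¬ Beh a (β + {g})) : 2 * (β + {g}).card ≤ (subs (β + {g})).card := by
  classical
  obtain ⟨m, hm1, hm, hlt, hsub⟩ := hb
  have hcard : (subs β).card = m.sum + 1 := by
    have : subs β = (Finset.range (m.sum + 1)).image (fun j => j • a) := by
      ext x
      rw [hsub]
      simp only [Finset.mem_image, Finset.mem_range, Nat.lt_succ_iff]
      constructor
      · rintro ⟨j, hj, rfl⟩; exact ⟨j, hj, rfl⟩
      · rintro ⟨j, hj, rfl⟩; exact ⟨j, hj, rfl⟩
    rw [this, Finset.card_image_of_injOn, Finset.card_range]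
    intro i hi j hj hij
    simp only [Finset.coe_range, Set.mem_Iio] at hi hj
    exact nsmul_injOn_Iio_addOrderOf (by simp; omega) (by simp; omega) hij
  have hmc := card_le_sum_nat m hm1
  have hbc : β.card = m.card := by rw [hm]; simp
  have hdisj : Disjoint (subs β) ((subs β).image (· + g)) := by
    rw [Finset.disjoint_left]
    intro x hx hx'
    obtain ⟨y, hy, rfl⟩ := Finset.mem_image.1 hx'
    obtain ⟨j, hj, hje⟩ := (hsub _).1 hx
    obtain ⟨i, hi, rfl⟩ := (hsub _).1 hy
    by_cases hij : j ≤ i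
    · apply neg_notMem hz
      refine (hsub _).2 ⟨i - j, by omega, ?_⟩
      have : i • a = (i - j) • a + j • a := by rw [← add_nsmul]; congr 1; omega
      simp only [this] at hje
      have h2 : (i - j) • a + g = 0 := by
        have : ((i - j) • a + g) + j • a = 0 + j • a := by rw [zero_add]; exact Eq.trans (by abel) hje
        exact add_right_cancel this
      exact (eq_neg_of_add_eq_zero_left h2).symm
    · obtain ⟨k, rfl⟩ := Nat.exists_eq_add_of_lt (not_le.1 hij)
      have hg : g = (k + 1) • a := by
        have : i • a + g = i • a + (k + 1) • a := by
          rw [← add_nsmul]; exact hje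
        exact add_left_cancel this
      apply hnb
      have hs : ∀ x, x ∈ subs (β + {g}) ↔ ∃ j ≤ (m + {k+1}).sum, x = j • a := by
        intro x
        simp only [mem_subs_add, mem_subs_singleton, hsub, Multiset.sum_add,
          Multiset.sum_singleton]
        constructor
        · rintro ⟨_, ⟨l, hl, rfl⟩, z, rfl | rfl, rfl⟩
          · exact ⟨l, by omega, by simp⟩
          · exact ⟨l + (k+1), by omega, by rw [hg, ← add_nsmul]⟩
        · rintro ⟨l, hl, rfl⟩
          by_cases h : l ≤ m.sum
          · exact ⟨_, ⟨l, h, rfl⟩, 0, Or.inl rfl, by simp⟩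
          · refine ⟨_, ⟨l - (k+1), by omega, rfl⟩, g, Or.inr rfl, ?_⟩
            rw [hg, ← add_nsmul]; congr 1; omega
      refine ⟨m + {k+1}, ?_, ?_, ?_, hs⟩
      · intro x hx
        rcases Multiset.mem_add.1 hx with hx | hx
        · exact hm1 x hx
        · simp at hx; omega
      · rw [Multiset.map_add, ← hm, Multiset.map_singleton, ← hg]
      · by_contra hcon
        rw [not_lt, Multiset.sum_add, Multiset.sum_singleton] at hcon
        apply neg_notMem hz
        refine (hsub _).2 ⟨addOrderOf a - (k + 1), by omega, ?_⟩
        rw [eq_comm, eq_neg_iff_add_eq_zero, hg, ← add_nsmul,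
          Nat.sub_add_cancel (by omega), addOrderOf_nsmul_eq_zero]
  have hsubset : (subs β) ∪ ((subs β).image (· + g)) ⊆ subs (β + {g}) := by
    intro x hx
    rw [mem_subs_add]
    rcases Finset.mem_union.1 hx with hx | hx
    · exact ⟨x, hx, 0, zero_mem_subs _, by simp⟩
    · obtain ⟨y, hy, rfl⟩ := Finset.mem_image.1 hx
      exact ⟨y, hy, g, mem_subs_singleton.2 (Or.inr rfl), rfl⟩
  have := Finset.card_le_card hsubset
  rw [Finset.card_union_of_disjoint hdisj,
    Finset.card_image_of_injective _ (add_left_injective g), hcard] at this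
  simp only [Multiset.card_add, Multiset.card_singleton]
  omega

theorem one_term {s : Multiset G} {g : G} (h : ZFm (s + {g}))
    (hc : (subs (s + {g})).card ≤ (subs s).card + 1) {x : G} (hx : x ∈ subs (s + {g})) :
    x ∈ subs s ∨ x = (s + {g}).sum := by
  classical
  have hsub : insert (s + {g}).sum (subs s) ⊆ subs (s + {g}) :=
    Finset.insert_subset (sum_mem_subs _) (subs_mono (by simp))
  have hn : (s + {g}).sum ∉ subs s := by
    have := sum_notMem h
    simpa using this
  have := Finset.eq_of_subset_of_card_le hsub (by rw [Finset.card_insert_of_notMem hn]; exact hc)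
  rw [← this, Finset.mem_insert] at hx
  tauto

theorem terms_eq {Z : Multiset G} {g h : G} (hz : ZFm (Z + {h} + {g}))
    (hg : ∀ x ∈ subs (Z + {h} + {g}), x ∈ subs (Z + {h}) ∨ x = (Z + {h} + {g}).sum)
    (hh : ∀ x ∈ subs (Z + {h} + {g}), x ∈ subs (Z + {g}) ∨ x = (Z + {h} + {g}).sum) :
    g = h := by
  have e : Z + {h} + {g} = Z + {g} + {h} := by abel
  have key : ∀ g h : G, ZFm (Z + {h} + {g}) →
      (∀ x ∈ subs (Z + {h} + {g}), x ∈ subs (Z + {h}) ∨ x = (Z + {h} + {g}).sum) →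
      (∀ x ∈ subs (Z + {h} + {g}), x ∈ subs (Z + {g}) ∨ x = (Z + {h} + {g}).sum) →
      g = h ∨ (Z + {h} + {g}).sum = -g := by
    intro g h hz hg hh
    have e : Z + {h} + {g} = Z + {g} + {h} := by abel
    have h0 : h ≠ 0 := by
      intro h0
      exact hz {h} (by rw [add_assoc, add_comm, add_assoc]; simp) (by simp) (by simp [h0])
    have m1 : (Z + {g}).sum ∈ subs (Z + {h} + {g}) := by
      rw [e]; exact subs_mono (by simp) (sum_mem_subs _)
    have m2 : (Z + {g}).sum ∈ subs (Z + {h}) := by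
      rcases hg _ m1 with h1 | h1
      · exact h1
      · exact absurd (by simpa using h1) h0
    have m3 : (Z + {g}).sum + g ∈ subs (Z + {h} + {g}) :=
      mem_subs_add.2 ⟨_, m2, g, mem_subs_singleton.2 (Or.inr rfl), rfl⟩
    rcases hh _ m3 with h1 | h1
    · right
      have m4 : (Z + {g}).sum + g + h ∈ subs (Z + {h} + {g}) := by
        rw [e]
        exact mem_subs_add.2 ⟨_, h1, h, mem_subs_singleton.2 (Or.inr rfl), rfl⟩
      have m5 := subs_symm m4
      have e5 : (Z + {h} + {g}).sum - ((Z + {g}).sum + g + h) = -g := by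
        simp; abel
      rw [e5] at m5
      rcases hg _ m5 with h2 | h2
      · exact absurd h2 (neg_notMem hz)
      · exact h2.symm
    · left
      simp only [Multiset.sum_add, Multiset.sum_singleton] at h1
      have : Z.sum + g + g = Z.sum + g + h := by rw [h1]; abel
      exact add_left_cancel this
  rcases key g h hz hg hh with h1 | h1
  · exact h1
  · rcases key h g (e ▸ hz) (e ▸ hh) (e ▸ hg) with h2 | h2
    · exact h2.symm
    · rw [e] at h1
      rw [h1] at h2
      exact neg_injective h2

theorem switch_gen [Finite G] {a g : G} {β : Multiset G} {c : ℕ} (hb : Beh a β) (hβ : β ≠ 0)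
    (hz : ZFm (β + Multiset.replicate c g + {g}))
    (hg : ∀ x ∈ subs (β + Multiset.replicate c g + {g}),
      x ∈ subs (β + Multiset.replicate c g) ∨ x = (β + Multiset.replicate c g + {g}).sum) :
    Beh g (β + Multiset.replicate c g) := by
  obtain ⟨m, hm1, hm, hlt, hsub⟩ := hb
  have hY : ∀ x, x ∈ subs (β + Multiset.replicate c g) ↔
      ∃ j ≤ m.sum, ∃ i ≤ c, x = j • a + i • g := by
    intro x
    simp only [mem_subs_add, hsub, mem_subs_replicate]
    constructor
    · rintro ⟨_, ⟨j, hj, rfl⟩, _, ⟨i, hi, rfl⟩, rfl⟩; exact ⟨j, hj, i, hi, rfl⟩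
    · rintro ⟨j, hj, i, hi, rfl⟩; exact ⟨_, ⟨j, hj, rfl⟩, _, ⟨i, hi, rfl⟩, rfl⟩
  have hS : 1 ≤ m.sum := by
    have := card_le_sum_nat m hm1
    have h2 : 0 < β.card := Multiset.card_pos.2 hβ
    rw [hm, Multiset.card_map] at h2
    omega
  have hneg := neg_notMem hz
  have ha0 : a ≠ 0 := by
    rintro rfl
    simp at hlt; omega
  set Y := β + Multiset.replicate c g with hYdef
  have haY : a ∈ subs Y := (hY a).2 ⟨1, hS, 0, by omega, by simp⟩
  have h1 : Y.sum - a + g ∈ subs (Y + {g}) :=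
    mem_subs_add.2 ⟨_, subs_symm haY, g, mem_subs_singleton.2 (Or.inr rfl), rfl⟩
  have h2 : Y.sum - a + g ∈ subs Y := by
    rcases hg _ h1 with h | h
    · exact h
    · exact absurd (by simpa using h) ha0
  have h3 : a - g ∈ subs Y := by
    have := subs_symm h2
    have e : Y.sum - (Y.sum - a + g) = a - g := by abel
    rwa [e] at this
  obtain ⟨j, hj, i, hi, hji⟩ := (hY _).1 h3
  have hw : a = (i + 1) • g := by
    rcases j with _ | j
    · rw [zero_nsmul, zero_add] at hji
      rw [succ_nsmul, ← hji]; abel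
    · exfalso
      apply hneg
      refine (hY _).2 ⟨j, by omega, i, hi, ?_⟩
      have : -g = (a - g) - a := by abel
      rw [this, hji, succ_nsmul]; abel
  have hall : ∀ k ≤ m.sum * (i + 1) + c, k • g ∈ subs Y := by
    intro k hk
    rw [hY]
    by_cases hq : k / (i + 1) ≤ m.sum
    · refine ⟨k / (i+1), hq, k % (i+1), ?_, ?_⟩
      · have := Nat.mod_lt k (Nat.succ_pos i); simp only [Nat.succ_eq_add_one] at this; omega
      · rw [hw, ← mul_nsmul, ← add_nsmul]; congr 1; exact (Nat.div_add_mod k (i+1)).symm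
    · have : m.sum * (i+1) ≤ k := by
        have h5 : m.sum * (i + 1) ≤ k / (i+1) * (i+1) := Nat.mul_le_mul_right _ (by omega)
        exact h5.trans (Nat.div_mul_le_self _ _)
      refine ⟨m.sum, le_rfl, k - m.sum * (i+1), by omega, ?_⟩
      rw [hw, ← mul_nsmul, ← add_nsmul]; congr 1
      rw [mul_comm (i+1)]; omega
  have hsum : (m.map (fun x => x * (i+1)) + Multiset.replicate c 1).sum
      = m.sum * (i + 1) + c := by
    simp [Multiset.sum_map_mul_right]
  refine ⟨m.map (fun x => x * (i+1)) + Multiset.replicate c 1, ?_, ?_, ?_, ?_⟩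
  · intro x hx
    rcases Multiset.mem_add.1 hx with hx | hx
    · obtain ⟨y, hy, rfl⟩ := Multiset.mem_map.1 hx
      exact Nat.mul_pos (hm1 y hy) (Nat.succ_pos i)
    · rw [Multiset.eq_of_mem_replicate hx]
  · rw [hYdef, Multiset.map_add, Multiset.map_map, Multiset.map_replicate, one_nsmul, hm]
    congr 1
    apply Multiset.map_congr rfl
    intro x _
    rw [hw, ← mul_nsmul, mul_comm]; rfl
  · rw [hsum]
    by_contra hcon
    apply hneg
    have hpos : 0 < addOrderOf g := addOrderOf_pos g
    have := hall (addOrderOf g - 1) (by omega)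
    have e : (addOrderOf g - 1) • g = -g := by
      rw [eq_neg_iff_add_eq_zero, ← succ_nsmul, Nat.sub_add_cancel hpos, addOrderOf_nsmul_eq_zero]
    rwa [e] at this
  · intro x
    rw [hsum]
    constructor
    · intro hx
      obtain ⟨j, hj, l, hl, rfl⟩ := (hY _).1 hx
      refine ⟨j * (i+1) + l, add_le_add (Nat.mul_le_mul_right _ hj) hl, ?_⟩
      rw [add_nsmul, mul_comm, mul_nsmul, ← hw]
    · rintro ⟨k, hk, rfl⟩
      exact hall k hk

theorem exists_beh [Finite G] {α : Multiset G} (hz : ZFm α) (hlen : Nat.card G < 2 * α.card) :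
    ∃ a, Beh a α := by
  classical
  have := Fintype.ofFinite G
  -- maximal behaving subsequence
  let P : ℕ → Prop := fun k => ∃ β ≤ α, β ≠ 0 ∧ β.card = k ∧ ∃ a, Beh a β
  have hne : α ≠ 0 := by rintro rfl; simp at hlen
  have hP1 : P 1 := by
    obtain ⟨a, ha⟩ := Multiset.exists_mem_of_ne_zero hne
    have hle : ({a} : Multiset G) ≤ α := Multiset.singleton_le.2 ha
    have ha0 : a ≠ 0 := by
      intro h
      exact hz {a} hle (by simp) (by simp [h])
    refine ⟨{a}, hle, by simp, by simp, a, {1}, by simp, by simp, ?_, ?_⟩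
    · have h1 := addOrderOf_pos a
      have h2 : addOrderOf a ≠ 1 := by rwa [Ne, AddMonoid.addOrderOf_eq_one_iff]
      simp; omega
    · intro x
      rw [mem_subs_singleton]
      constructor
      · rintro (rfl | rfl)
        · exact ⟨0, by simp, by simp⟩
        · exact ⟨1, by simp, by simp⟩
      · rintro ⟨j, hj, rfl⟩
        simp at hj
        interval_cases j <;> simp
  have hPb : ∀ k, P k → k ≤ α.card := by
    rintro k ⟨β, hβ, -, rfl, -⟩; exact Multiset.card_le_card hβ
  have hspec := Nat.findGreatest_spec (P := P) (hPb 1 hP1) hP1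
  have hmax : ∀ k, P k → k ≤ Nat.findGreatest P α.card :=
    fun k hk => Nat.le_findGreatest (hPb k hk) hk
  obtain ⟨β, hβ, hβ0, hβc, a, hb⟩ := hspec
  rw [← hβc] at hmax
  by_cases hβα : β = α
  · exact ⟨a, hβα ▸ hb⟩
  exfalso
  -- minimal extension
  let Q : ℕ → Prop := fun k => ∃ γ, γ ≠ 0 ∧ β + γ ≤ α ∧ γ.card = k ∧
    (subs (β + γ)).card < 2 * (β + γ).card
  have hQ : ∃ k, Q k := by
    refine ⟨_, α - β, ?_, ?_, rfl, ?_⟩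
    · intro h
      exact hβα (le_antisymm hβ (tsub_eq_zero_iff_le.1 h))
    · rw [add_tsub_cancel_of_le hβ]
    · rw [add_tsub_cancel_of_le hβ]
      refine lt_of_le_of_lt ?_ hlen
      rw [Nat.card_eq_fintype_card]
      exact Finset.card_le_univ _
  obtain ⟨γ, hγ0, hγα, hγc, hγs⟩ := Nat.find_spec hQ
  have hmin : ∀ k, Q k → γ.card ≤ k := fun k hk => hγc ▸ Nat.find_min' hQ hk
  have hzγ : ZFm (β + γ) := hz.mono hγα
  obtain ⟨g, hg⟩ := Multiset.exists_mem_of_ne_zero hγ0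
  have herase : ∀ h ∈ γ, γ.erase h + {h} = γ := by
    intro h hh
    rw [add_comm, Multiset.singleton_add, Multiset.cons_erase hh]
  have hone : γ.erase g ≠ 0 := by
    intro h0
    have e := herase g hg
    rw [h0, zero_add] at e
    rw [← e] at hzγ hγs hγα
    have hnb : ¬ Beh a (β + {g}) := by
      intro hb'
      have := hmax _ ⟨β + {g}, hγα, by simp, rfl, a, hb'⟩
      simp at this
    have := step_one hzγ hb hnb
    omega
  have hter : ∀ h ∈ γ, ∀ x ∈ subs (β + γ), x ∈ subs (β + γ.erase h) ∨ x = (β + γ).sum := by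
    intro h hh x hx
    have e : β + γ = β + γ.erase h + {h} := by rw [add_assoc, herase h hh]
    have hce : γ.card = (γ.erase h).card + 1 := by
      conv_lhs => rw [← herase h hh]
      simp
    have hce' : γ.card = (γ.erase g).card + 1 := by
      conv_lhs => rw [← herase g hg]
      simp
    have hcp : 0 < (γ.erase g).card := Multiset.card_pos.2 hone
    have hlow : 2 * (β + γ.erase h).card ≤ (subs (β + γ.erase h)).card := by
      by_contra hcon
      have := hmin _ ⟨γ.erase h, ?_, ?_, rfl, not_le.1 hcon⟩
      · omega
      · rw [← Multiset.card_pos]; omega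
      · exact le_trans (by gcongr; exact Multiset.erase_le _ _) hγα
    rw [e] at hx hzγ ⊢
    refine one_term hzγ ?_ hx
    rw [← e]
    simp only [Multiset.card_add] at hγs hlow
    omega
  have heq : ∀ h ∈ γ, h = g := by
    intro h hh
    by_contra hne
    have hh' : h ∈ γ.erase g := (Multiset.mem_erase_of_ne hne).2 hh
    have e1 : γ.erase g = (γ.erase g).erase h + {h} := by
      rw [add_comm, Multiset.singleton_add, Multiset.cons_erase hh']
    have e2 : γ.erase h = (γ.erase g).erase h + {g} := by
      rw [Multiset.erase_comm, add_comm, Multiset.singleton_add, Multiset.cons_erase]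
      exact (Multiset.mem_erase_of_ne (Ne.symm hne)).2 hg
    have e : β + γ = (β + (γ.erase g).erase h) + {h} + {g} := by
      rw [← herase g hg]
      conv_lhs => rw [e1]
      simp only [add_assoc, herase g hg]
    have t1 := hter g hg
    have t2 := hter h hh
    rw [e1, ← add_assoc, e] at t1
    rw [e2, ← add_assoc, e] at t2
    rw [e] at hzγ
    exact hne (terms_eq hzγ t1 t2).symm
  have hrep : γ.erase g = Multiset.replicate (γ.erase g).card g :=
    Multiset.eq_replicate_card.2 fun h hh => heq h (Multiset.mem_of_mem_erase hh)
  have e : β + γ = β + Multiset.replicate (γ.erase g).card g + {g} := by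
    rw [← hrep, add_assoc, herase g hg]
  have t := hter g hg
  rw [e] at t hzγ hγα
  have hbg : Beh g (β + Multiset.replicate (γ.erase g).card g) := by
    refine switch_gen hb hβ0 hzγ ?_
    intro x hx
    have := t x hx
    rwa [hrep, Multiset.card_replicate] at this
  have := hmax _ ⟨_, le_trans (by simp) hγα, by simp [hβ0], rfl, g, hbg⟩
  have hcp : 0 < (γ.erase g).card := Multiset.card_pos.2 hone
  rw [Multiset.card_add, Multiset.card_replicate] at this
  omega

end Helpers

theorem stmt10 (n : ℕ) (hn : 1 < n) (α : List (ZMod n))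
    (hlen : n < 2 * α.length) (hzf : ZeroFree α) :
    ∃ g : ℤ, IsCoprime g (n : ℤ) ∧
      (α.map (fun a => lpr n ((g : ZMod n) * a))).sum < n := by
  have : NeZero n := ⟨by omega⟩
  have hz : ZFm (α : Multiset (ZMod n)) := by
    intro t ht hne
    induction t using Quotient.inductionOn with
    | _ l =>
      obtain ⟨l', hp, hs⟩ := Multiset.coe_le.1 ht
      have := hzf l' hs (by
        rintro rfl
        apply hne
        simpa using hp)
      rw [hp.sum_eq] at this
      simpa using this
  obtain ⟨a, m, hm1, hm, hlt, -⟩ := exists_beh hz (by simpa using hlen)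
  have hcard := card_le_sum_nat m hm1
  have hcm : m.card = α.length := by
    have := congrArg Multiset.card hm
    simpa using this.symm
  have hord : addOrderOf a = n := by
    have hd : addOrderOf a ∣ n := by
      have := addOrderOf_dvd_card (x := a)
      rwa [ZMod.card] at this
    obtain ⟨k, hk⟩ := hd
    have hk1 : k = 1 := by
      rcases k with _ | _ | k
      · omega
      · rfl
      · exfalso
        have : addOrderOf a * 2 ≤ n := by
          conv_rhs => rw [hk]
          exact Nat.mul_le_mul_left _ (by omega)
        omega
    rw [hk1, mul_one] at hk
    exact hk.symm
  have hcop : Nat.Coprime a.val n := by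
    have h1 := ZMod.addOrderOf_coe a.val (by omega : n ≠ 0)
    rw [ZMod.natCast_zmod_val, hord] at h1
    have hg : Nat.gcd n a.val ∣ n := Nat.gcd_dvd_left _ _
    obtain ⟨k, hk⟩ := hg
    have hgp : 0 < Nat.gcd n a.val := Nat.gcd_pos_of_pos_left _ (by omega)
    have h2 := Nat.div_mul_cancel (Nat.gcd_dvd_left n a.val)
    rw [← h1] at h2
    rw [Nat.coprime_comm]
    exact Nat.eq_of_mul_eq_mul_left (by omega : 0 < n) (by rw [h2, mul_one])
  have hu : IsUnit a := by
    have := (ZMod.isUnit_iff_coprime a.val n).2 hcop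
    rwa [ZMod.natCast_zmod_val] at this
  obtain ⟨u, rfl⟩ := hu
  refine ⟨((↑u⁻¹ : ZMod n).val : ℤ), ?_, ?_⟩
  · rw [Nat.isCoprime_iff_coprime]
    exact ZMod.val_coe_unit_coprime u⁻¹
  · have h1 : (α.map (fun b => lpr n ((((↑u⁻¹ : ZMod n).val : ℤ) : ZMod n) * b))).sum
        = ((α : Multiset (ZMod n)).map
          (fun b => lpr n ((((↑u⁻¹ : ZMod n).val : ℤ) : ZMod n) * b))).sum := by
      simp
    rw [h1, hm, Multiset.map_map]
    have h2 : m.map ((fun b => lpr n ((((↑u⁻¹ : ZMod n).val : ℤ) : ZMod n) * b)) ∘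
        (fun x => x • (u : ZMod n))) = m.map id := by
      apply Multiset.map_congr rfl
      intro x hx
      have hx1 := hm1 x hx
      have hx2 : x ≤ m.sum := Multiset.le_sum_of_mem hx
      have e : ((((↑u⁻¹ : ZMod n).val : ℤ) : ZMod n) * (x • (u : ZMod n))) = (x : ZMod n) := by
        rw [Int.cast_natCast, ZMod.natCast_zmod_val, nsmul_eq_mul, mul_left_comm,
          Units.inv_mul, mul_one]
      have hv : ((x : ℕ) : ZMod n).val = x := ZMod.val_cast_of_lt (by omega)
      simp only [Function.comp_apply, id]
      rw [e, lpr, if_neg, hv]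
      intro h0
      rw [h0, ZMod.val_zero] at hv
      omega
    rw [h2, Multiset.map_id]
    omega
end

section
/- Let n > 1 and let α be a minimal zero sequence in Z/nZ of length greater than n/2 + 1. Then Index(α) = n. -/
namespace SavChen

open Multiset

variable {G : Type*} [AddCommGroup G] [DecidableEq G]

/-- all subset sums, including the empty one -/
def SS (s : Multiset G) : Finset G := (s.powerset.map Multiset.sum).toFinset

/-- zero-free multisets -/
def ZF (s : Multiset G) : Prop := ∀ t ≤ s, t ≠ 0 → t.sum ≠ 0

lemma mem_SS {s : Multiset G} {y : G} : y ∈ SS s ↔ ∃ t ≤ s, t.sum = y := by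
  simp [SS]

lemma zero_mem_SS (s : Multiset G) : (0 : G) ∈ SS s := mem_SS.2 ⟨0, by simp, by simp⟩

lemma sum_mem_SS (s : Multiset G) : s.sum ∈ SS s := mem_SS.2 ⟨s, le_rfl, rfl⟩

lemma SS_mono {s t : Multiset G} (h : s ≤ t) : SS s ⊆ SS t := by
  intro y hy
  obtain ⟨u, hu, rfl⟩ := mem_SS.1 hy
  exact mem_SS.2 ⟨u, hu.trans h, rfl⟩

lemma SS_cons (a : G) (s : Multiset G) : SS (a ::ₘ s) = SS s ∪ (SS s).image (a + ·) := by
  ext y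
  rw [Finset.mem_union, Finset.mem_image]
  simp [SS, Multiset.powerset_cons, -Finset.mem_image]

lemma ZF.mono {s t : Multiset G} (h : ZF t) (hs : s ≤ t) : ZF s :=
  fun u hu hn => h u (hu.trans hs) hn

lemma ZF.neg_notMem {a : G} {s : Multiset G} (h : ZF (a ::ₘ s)) : -a ∉ SS s := by
  intro hm
  obtain ⟨u, hu, hs⟩ := mem_SS.1 hm
  exact h (a ::ₘ u) (Multiset.cons_le_cons a hu) (by simp) (by simp [hs])

lemma ZF.sum_notMem {a : G} {s : Multiset G} (h : ZF (a ::ₘ s)) : a + s.sum ∉ SS s := by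
  intro hm
  obtain ⟨u, hu, hs⟩ := mem_SS.1 hm
  obtain ⟨v, rfl⟩ := Multiset.le_iff_exists_add.1 hu
  refine h (a ::ₘ v) (Multiset.cons_le_cons a (by simp)) (by simp) ?_
  simp only [Multiset.sum_add, Multiset.sum_cons] at hs ⊢
  have : u.sum + (a + v.sum) = u.sum + 0 := by rw [add_zero]; conv_rhs => rw [hs]
                                               abel
  exact add_left_cancel this

lemma ZF.card_lt {a : G} {s : Multiset G} (h : ZF (a ::ₘ s)) :
    (SS s).card < (SS (a ::ₘ s)).card := by
  apply Finset.card_lt_card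
  refine ⟨SS_mono (Multiset.le_cons_self s a), fun hh => h.sum_notMem ?_⟩
  apply hh
  simpa using sum_mem_SS (a ::ₘ s)

lemma ZF.step {a : G} {s : Multiset G} (h : ZF (a ::ₘ s))
    (hc : (SS (a ::ₘ s)).card ≤ (SS s).card + 1) {y : G} (hy : y ∈ SS s) (hy0 : y ≠ 0) :
    y - a ∈ SS s := by
  by_contra hn
  set Z := SS s with hZ
  set Z' := Z.image (a + ·) with hZ'
  have hcard : Z'.card = Z.card := Finset.card_image_of_injective _ (add_right_injective a)
  rw [SS_cons] at hc
  have h1 : (Z ∪ Z').card + (Z ∩ Z').card = Z.card + Z'.card := Finset.card_union_add_card_inter _ _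
  have h2 : (Z ∩ Z') ⊆ (Z.erase 0).erase y := by
    intro z hz
    obtain ⟨hz1, hz2⟩ := Finset.mem_inter.1 hz
    obtain ⟨w, hw, rfl⟩ := Finset.mem_image.1 hz2
    refine Finset.mem_erase.2 ⟨?_, Finset.mem_erase.2 ⟨?_, hz1⟩⟩
    · rintro rfl; apply hn; simpa using hw
    · intro h0
      have : w = -a := by rw [eq_neg_iff_add_eq_zero, add_comm]; exact h0
      exact h.neg_notMem (this ▸ hw)
  have h3 := Finset.card_le_card h2
  have h4 : ((Z.erase 0).erase y).card + 1 = (Z.erase 0).card :=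
    Finset.card_erase_add_one (Finset.mem_erase.2 ⟨hy0, hy⟩)
  have h5 : (Z.erase 0).card + 1 = Z.card := Finset.card_erase_add_one (zero_mem_SS s)
  have h6 : (Z ∪ Z').card ≤ Z.card + 1 := hc
  omega

lemma lemmaA [Finite G] (Z : Finset G) (x w y : G) (hx0 : x ≠ 0) (hnw : -w ∉ Z)
    (hx : ∀ y ∈ Z, y ≠ 0 → y - x ∈ Z) (hw : ∀ y ∈ Z, y ≠ 0 → y - w ∈ Z)
    (hy : y ∈ Z) (hy0 : y ≠ 0) (hyx : x + y ∉ Z) : x = w := by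
  by_contra hne
  have h1 : x - w ∉ Z := by
    intro hm
    have := hx _ hm (sub_ne_zero.2 hne)
    apply hnw; simpa using this
  have h2 : x ∉ Z := fun hm => h1 (hw _ hm hx0)
  have h3 : ∀ i : ℕ, y - i • x ∈ Z ∧ y - i • x ≠ 0 := by
    intro i
    induction i with
    | zero => simpa using ⟨hy, hy0⟩
    | succ i ih =>
      have h4 := hx _ ih.1 ih.2
      have h5 : y - (i + 1) • x = y - i • x - x := by rw [succ_nsmul]; abel
      rw [h5]
      refine ⟨h4, fun h0 => h2 ?_⟩
      rw [← sub_eq_zero.1 h0]; exact ih.1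
  apply hyx
  have hpos : 0 < addOrderOf x := (isOfFinAddOrder_of_finite x).addOrderOf_pos
  have h6 := (h3 (addOrderOf x - 1)).1
  have h7 : (addOrderOf x - 1) • x = -x := by
    rw [eq_neg_iff_add_eq_zero, ← succ_nsmul, Nat.sub_add_cancel hpos, addOrderOf_nsmul_eq_zero]
  rw [h7] at h6
  rwa [sub_neg_eq_add, add_comm] at h6

lemma lemmaA' [Finite G] {s : Multiset G} (hs : s ≠ 0) {x w : G} (hx : ZF (x ::ₘ s))
    (hw : ZF (w ::ₘ s)) (hcx : (SS (x ::ₘ s)).card ≤ (SS s).card + 1)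
    (hcw : (SS (w ::ₘ s)).card ≤ (SS s).card + 1) : x = w := by
  have hx0 : x ≠ 0 := by simpa using hx {x} (by simp) (by simp)
  exact lemmaA (SS s) x w s.sum hx0 hw.neg_notMem
    (fun y h h0 => hx.step hcx h h0) (fun y h h0 => hw.step hcw h h0) (sum_mem_SS s)
    (hx s (Multiset.le_cons_self s x) hs) hx.sum_notMem

/-- `x` is a 1-term of `α`. -/
def One (x : G) (α : Multiset G) : Prop := x ∈ α ∧ (SS α).card ≤ (SS (α.erase x)).card + 1

lemma One.eq_erase {x : G} {α : Multiset G} (hα : ZF α) (hx : One x α) :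
    SS (α.erase x) = (SS α).erase α.sum := by
  have hc := Multiset.cons_erase hx.1
  have hz : ZF (x ::ₘ α.erase x) := by rwa [hc]
  apply Finset.eq_of_subset_of_card_le
  · intro y hy
    refine Finset.mem_erase.2 ⟨?_, SS_mono (Multiset.erase_le x α) hy⟩
    rintro rfl
    apply hz.sum_notMem
    rw [← Multiset.sum_cons, hc]; exact hy
  · rw [Finset.card_erase_of_mem (sum_mem_SS α)]
    have := hx.2
    omega

lemma lemmaC [Finite G] {α : Multiset G} (hα : ZF α) {x w : G} (hx : One x α) (hw : One w α) :
    x = w := by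
  have hcx := Multiset.cons_erase hx.1
  have hcw := Multiset.cons_erase hw.1
  have hzx : ZF (x ::ₘ α.erase x) := by rwa [hcx]
  have hzw : ZF (w ::ₘ α.erase w) := by rwa [hcw]
  have heq : SS (α.erase x) = SS (α.erase w) := by rw [hx.eq_erase hα, hw.eq_erase hα]
  by_cases h0 : α.erase x = 0
  · rw [h0] at hcx
    have := hw.1
    rw [← hcx] at this
    have h := Multiset.mem_singleton.1 this
    exact h.symm
  have hx0 : x ≠ 0 := by simpa using hzx {x} (by simp) (by simp)
  refine lemmaA (SS (α.erase x)) x w (α.erase x).sum hx0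
    (heq ▸ hzw.neg_notMem) (fun y h h0 => hzx.step (by rw [hcx]; exact hx.2) h h0) ?_
    (sum_mem_SS _) (hα _ (Multiset.erase_le x α) h0) hzx.sum_notMem
  rw [heq]
  exact fun y h h0 => hzw.step (by rw [hcw]; exact hw.2) h h0

lemma card_cons_cons (x : G) (s : Multiset G) (h : (SS (x ::ₘ s)).card ≤ (SS s).card + 1) :
    (SS (x ::ₘ x ::ₘ s)).card ≤ (SS (x ::ₘ s)).card + 1 := by
  have h1 : SS (x ::ₘ x ::ₘ s) ⊆
      SS (x ::ₘ s) ∪ (SS (x ::ₘ s) \ SS s).image (x + ·) := by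
    intro y hy
    rw [SS_cons] at hy
    rcases Finset.mem_union.1 hy with hy | hy
    · exact Finset.mem_union_left _ hy
    · obtain ⟨z, hz, rfl⟩ := Finset.mem_image.1 hy
      by_cases hzs : z ∈ SS s
      · apply Finset.mem_union_left
        rw [SS_cons]
        exact Finset.mem_union_right _ (Finset.mem_image_of_mem _ hzs)
      · exact Finset.mem_union_right _ (Finset.mem_image_of_mem _ (Finset.mem_sdiff.2 ⟨hz, hzs⟩))
  have h2 := Finset.card_le_card h1
  have h3 := Finset.card_union_le (SS (x ::ₘ s)) ((SS (x ::ₘ s) \ SS s).image (x + ·))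
  have h4 : ((SS (x ::ₘ s) \ SS s).image (x + ·)).card ≤ (SS (x ::ₘ s) \ SS s).card :=
    Finset.card_image_le
  have h5 := Finset.card_sdiff_add_card_eq_card (SS_mono (Multiset.le_cons_self s x))
  omega

lemma card_replicate (x : G) (s : Multiset G) (h : (SS (x ::ₘ s)).card ≤ (SS s).card + 1) (r : ℕ) :
    (SS (x ::ₘ (replicate r x + s))).card ≤ (SS (replicate r x + s)).card + 1 := by
  induction r with
  | zero => simpa using h
  | succ r ih =>
    simp only [Multiset.replicate_succ, Multiset.cons_add]
    exact card_cons_cons _ _ ih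

lemma exists_max (α β0 : Multiset G) (P : Multiset G → Prop) (h : P β0) (hle : β0 ≤ α) :
    ∃ β, β0 ≤ β ∧ β ≤ α ∧ P β ∧ ∀ y, y ::ₘ β ≤ α → ¬ P (y ::ₘ β) := by
  by_contra hcon
  push Not at hcon
  have key : ∀ k : ℕ, ∃ β, β0 ≤ β ∧ β ≤ α ∧ P β ∧ k ≤ Multiset.card β := by
    intro k
    induction k with
    | zero => exact ⟨β0, le_rfl, hle, h, by simp⟩
    | succ k ih =>
      obtain ⟨β, h1, h2, h3, h4⟩ := ih
      obtain ⟨y, hy1, hy2⟩ := hcon β h1 h2 h3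
      exact ⟨_, h1.trans (Multiset.le_cons_self _ _), hy1, hy2, by simpa using h4⟩
  obtain ⟨β, -, h2, -, h4⟩ := key (Multiset.card α + 1)
  have := Multiset.card_le_card h2
  omega

lemma lemmaB [Fintype G] {α β0 : Multiset G} (hα : ZF α)
    (hlen : Fintype.card G < 2 * Multiset.card α) (hle : β0 ≤ α) (h0 : β0 ≠ 0)
    (hc : 2 * Multiset.card β0 ≤ (SS β0).card) :
    ∃ x, x ::ₘ β0 ≤ α ∧ One x α := by
  obtain ⟨β, h1, h2, h3, h4⟩ :=
    exists_max α β0 (fun β => 2 * Multiset.card β ≤ (SS β).card) hc hle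
  obtain ⟨W, rfl⟩ := Multiset.le_iff_exists_add.1 h2
  have hβ0 : β ≠ 0 := by
    rintro rfl
    exact h0 (by simpa using h1)
  have hW : W ≠ 0 := by
    rintro rfl
    have := Finset.card_le_univ (SS β)
    simp only [add_zero] at hlen
    omega
  have hsub : ∀ w ∈ W, w ::ₘ β ≤ β + W := by
    intro w hw
    rw [← Multiset.singleton_add, add_comm]
    exact add_le_add_right (Multiset.singleton_le.2 hw) _
  have hone : ∀ w ∈ W, (SS (w ::ₘ β)).card ≤ (SS β).card + 1 := by
    intro w hw
    have := h4 w (hsub w hw)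
    simp only [Multiset.card_cons] at this
    omega
  obtain ⟨x, hx⟩ := Multiset.exists_mem_of_ne_zero hW
  have hall : ∀ w ∈ W, w = x := fun w hw =>
    lemmaA' hβ0 (hα.mono (hsub w hw)) (hα.mono (hsub x hx)) (hone w hw) (hone x hx)
  obtain ⟨r, hr⟩ : ∃ r, W = replicate (r + 1) x := by
    refine ⟨Multiset.card W - 1, ?_⟩
    rw [Nat.sub_add_cancel (Multiset.card_pos.2 hW)]
    exact Multiset.eq_replicate_card.2 hall
  have heq : β + W = x ::ₘ (replicate r x + β) := by
    rw [hr, Multiset.replicate_succ, add_comm, Multiset.cons_add]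
  refine ⟨x, (Multiset.cons_le_cons x h1).trans (hsub x hx), ?_, ?_⟩
  · rw [heq]; simp
  · rw [heq, Multiset.erase_cons_head]
    exact card_replicate x β (hone x hx) r

theorem structure_thm [Fintype G] {α : Multiset G} (hα : ZF α)
    (hlen : Fintype.card G < 2 * Multiset.card α) :
    ∃ (x : G) (t : Multiset ℕ), α = t.map (· • x) ∧ (∀ i ∈ t, 1 ≤ i) ∧
      t.sum < addOrderOf x := by
  have hα0 : α ≠ 0 := by rintro rfl; simp at hlen
  obtain ⟨a, ha⟩ := Multiset.exists_mem_of_ne_zero hα0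
  have ha0 : a ≠ 0 := by simpa using hα {a} (by simpa using ha) (by simp)
  obtain ⟨x, -, hx⟩ := lemmaB (β0 := {a}) hα hlen (by simpa using ha) (by simp) (by
    have : ({0, a} : Finset G) ⊆ SS {a} := by
      intro y hy
      rcases Finset.mem_insert.1 hy with rfl | hy
      · exact zero_mem_SS _
      · rw [Finset.mem_singleton.1 hy]
        simpa using sum_mem_SS {a}
    have h2 := Finset.card_le_card this
    rw [Finset.card_pair ha0.symm] at h2
    simpa using h2)
  have hx0 : x ≠ 0 := by simpa using hα {x} (by simpa using hx.1) (by simp)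
  have hord : 1 < addOrderOf x := by
    have h1 : 0 < addOrderOf x := (isOfFinAddOrder_of_finite x).addOrderOf_pos
    have h2 : addOrderOf x ≠ 1 := by simpa using hx0
    omega
  obtain ⟨T, hT1, hT2, ⟨t, hTt, ht1, htS, htc⟩, hmax⟩ := exists_max α {x}
    (fun T => ∃ t : Multiset ℕ, T = t.map (· • x) ∧ (∀ i ∈ t, 1 ≤ i) ∧ t.sum < addOrderOf x ∧
      ∀ j ≤ t.sum, j • x ∈ SS T)
    ⟨{1}, by simp, by simp, by simpa using hord, by
      intro j hj
      simp only [Multiset.sum_singleton] at hj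
      interval_cases j
      · simpa using zero_mem_SS _
      · simpa using sum_mem_SS {x}⟩ (by simpa using hx.1)
  by_cases hTα : T = α
  · exact ⟨x, t, hTα ▸ hTt, ht1, htS⟩
  exfalso
  have hno : ∀ y, y ::ₘ T ≤ α → ∀ k, 1 ≤ k → k ≤ t.sum + 1 → y ≠ k • x := by
    intro y hy k hk1 hk2 hyk
    have hz := hα.mono hy
    refine hmax y hy ⟨k ::ₘ t, by simp [hTt, hyk], ?_, ?_, ?_⟩
    · intro i hi
      rcases Multiset.mem_cons.1 hi with rfl | hi
      · exact hk1
      · exact ht1 i hi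
    · by_contra hcon
      simp only [Multiset.sum_cons, not_lt] at hcon
      apply hz.neg_notMem
      have h1 := htc (addOrderOf x - k) (by omega)
      have h2 : (addOrderOf x - k) • x = -y := by
        rw [eq_neg_iff_add_eq_zero, hyk, ← add_nsmul, Nat.sub_add_cancel (by omega),
          addOrderOf_nsmul_eq_zero]
      rwa [h2] at h1
    · intro j hj
      simp only [Multiset.sum_cons] at hj
      rw [SS_cons]
      by_cases hjt : j ≤ t.sum
      · exact Finset.mem_union_left _ (htc j hjt)
      · refine Finset.mem_union_right _ (Finset.mem_image.2 ⟨(j - k) • x, htc _ (by omega), ?_⟩)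
        rw [hyk, ← add_nsmul]
        congr 1
        omega
  obtain ⟨y, hy⟩ : ∃ y, y ::ₘ T ≤ α := Multiset.lt_iff_cons_le.1 (lt_of_le_of_ne hT2 hTα)
  have hz := hα.mono hy
  have hcT : Multiset.card T ≤ t.sum := by
    rw [hTt, Multiset.card_map]
    have := Multiset.card_nsmul_le_sum (s := t) (a := 1) ht1
    simpa using this
  -- lower bound for the number of sums
  set A := (Finset.range (t.sum + 1)).image (fun j => j • x) with hA
  have hAc : A.card = t.sum + 1 := by
    rw [hA, Finset.card_image_of_injOn, Finset.card_range]
    intro i hi j hj hij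
    simp only [Finset.coe_range, Set.mem_Iio] at hi hj
    exact nsmul_injOn_Iio_addOrderOf (by simp; omega) (by simp; omega) hij
  have hAT : A ⊆ SS T := by
    intro z hz
    obtain ⟨j, hj, rfl⟩ := Finset.mem_image.1 hz
    exact htc j (by simp at hj; omega)
  have hdisj : Disjoint A (A.image (y + ·)) := by
    rw [Finset.disjoint_left]
    intro z hz1 hz2
    obtain ⟨j, hj, rfl⟩ := Finset.mem_image.1 hz1
    obtain ⟨w, hw, hzw⟩ := Finset.mem_image.1 hz2
    obtain ⟨i, hi, rfl⟩ := Finset.mem_image.1 hw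
    simp only [Finset.mem_range] at hi hj
    rcases lt_or_ge i j with hij | hij
    · refine hno y hy (j - i) (by omega) (by omega) ?_
      apply add_right_cancel (b := i • x)
      rw [hzw, ← add_nsmul, Nat.sub_add_cancel hij.le]
    · apply hz.neg_notMem
      have h1 := htc (i - j) (by omega)
      have h2 : (i - j) • x = -y := by
        rw [eq_neg_iff_add_eq_zero]
        apply add_right_cancel (b := j • x)
        rw [zero_add, add_right_comm, ← add_nsmul, Nat.sub_add_cancel hij, add_comm, hzw]
      rwa [h2] at h1
  have hbig : 2 * (t.sum + 1) ≤ (SS (y ::ₘ T)).card := by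
    have h1 : A ∪ A.image (y + ·) ⊆ SS (y ::ₘ T) := by
      rw [SS_cons]
      exact Finset.union_subset_union hAT (Finset.image_subset_image hAT)
    have h2 := Finset.card_le_card h1
    rw [Finset.card_union_of_disjoint hdisj,
      Finset.card_image_of_injective _ (add_right_injective y), hAc] at h2
    omega
  obtain ⟨z, hz1, hz2⟩ := lemmaB hα hlen hy (by simp) (by simp only [Multiset.card_cons]; omega)
  have hzx := lemmaC hα hz2 hx
  subst hzx
  refine hno z ((Multiset.cons_le_cons z (Multiset.le_cons_self T y)).trans hz1) 1 le_rfl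
    (by omega) (by simp)

end SavChen

theorem stmt12 (n : ℕ) (hn : 1 < n) (α : List (ZMod n))
    (hlen : n + 2 < 2 * α.length)
    (hsum : α.sum = 0)
    (hmin : ∀ t : List (ZMod n), t.Sublist α → t ≠ [] → t ≠ α → t.sum ≠ 0) :
    sInf {m : ℕ | ∃ g : ℤ, IsCoprime g (n : ℤ) ∧
      (α.map (fun a => lpr n ((g : ZMod n) * a))).sum = m} = n := by
  haveI : NeZero n := ⟨by omega⟩
  have lpr_cast : ∀ a : ZMod n, ((lpr n a : ℕ) : ZMod n) = a := by
    intro a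
    unfold lpr
    split_ifs with h
    · simp [h]
    · simp
  have lpr_pos : ∀ a : ZMod n, 0 < lpr n a := by
    intro a
    unfold lpr
    split_ifs with h
    · omega
    · exact Nat.pos_of_ne_zero (by simpa using h)
  have lpr_nat : ∀ k : ℕ, 1 ≤ k → k < n → lpr n (k : ZMod n) = k := by
    intro k hk1 hk2
    have hv : (k : ZMod n).val = k := ZMod.val_cast_of_lt hk2
    unfold lpr
    split_ifs with h
    · rw [h] at hv; simp at hv; omega
    · exact hv
  have hge : ∀ g : ℤ, n ≤ (α.map (fun a => lpr n ((g : ZMod n) * a))).sum := by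
    intro g
    apply Nat.le_of_dvd
    · cases α with
      | nil => simp at hlen
      | cons a l =>
        have := lpr_pos ((g : ZMod n) * a)
        simp only [List.map_cons, List.sum_cons]
        omega
    · rw [← ZMod.natCast_eq_zero_iff]
      rw [Nat.cast_list_sum, List.map_map]
      have : ((Nat.cast : ℕ → ZMod n) ∘ fun a => lpr n ((g : ZMod n) * a)) =
          fun a => (g : ZMod n) * a := by
        funext a; exact lpr_cast _
      rw [this, List.sum_map_mul_left, List.map_id', hsum, mul_zero]
  have hex : ∃ g : ℤ, IsCoprime g (n : ℤ) ∧
      (α.map (fun a => lpr n ((g : ZMod n) * a))).sum = n := by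
    cases α with
    | nil => simp at hlen
    | cons a l =>
      have hz : SavChen.ZF (l : Multiset (ZMod n)) := by
        intro t ht ht0
        induction t using Quotient.inductionOn with
        | h t =>
          obtain ⟨u, hu1, hu2⟩ := (Multiset.coe_le.1 ht)
          have h1 := hmin u (hu2.trans (List.sublist_cons_self a l)) (by
            rintro rfl
            exact ht0 (by simpa using hu1)) (by
            rintro rfl
            have := hu2.length_le
            simp at this)
          rw [hu1.sum_eq] at h1
          simpa using h1
      obtain ⟨x, t, h1, h2, h3⟩ := SavChen.structure_thm hz (by
        rw [ZMod.card]
        simp only [List.length_cons] at hlen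
        simp only [Multiset.coe_card]
        omega)
      have hct : l.length ≤ t.sum := by
        have h4 : Multiset.card (l : Multiset (ZMod n)) = Multiset.card t := by rw [h1]; simp
        have := Multiset.card_nsmul_le_sum (s := t) (a := 1) h2
        simp at this h4
        omega
      have hdvd : addOrderOf x ∣ n := by
        have := addOrderOf_dvd_card (x := x)
        rwa [ZMod.card] at this
      have hordx : addOrderOf x = n := by
        obtain ⟨c, hc⟩ := hdvd
        simp only [List.length_cons] at hlen
        have hc2 : c < 2 := by
          by_contra hcon
          have : addOrderOf x * 2 ≤ addOrderOf x * c := Nat.mul_le_mul_left _ (by omega)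
          omega
        interval_cases c <;> omega
      have hcop : Nat.Coprime x.val n := by
        have h5 := ZMod.addOrderOf_coe x.val (n := n) (by omega)
        rw [ZMod.natCast_zmod_val, hordx] at h5
        have h6 : n.gcd x.val ∣ n := Nat.gcd_dvd_left _ _
        have h7 := Nat.div_mul_cancel h6
        rw [← h5] at h7
        have h8 : n.gcd x.val = 1 := by
          have : n * n.gcd x.val = n * 1 := by omega
          exact Nat.eq_of_mul_eq_mul_left (by omega) this
        rwa [Nat.gcd_comm] at h8
      set u := ZMod.unitOfCoprime x.val hcop with hu
      have hux : (u : ZMod n) = x := by simp [hu]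
      have hinv : ((u⁻¹ : (ZMod n)ˣ) : ZMod n) * x = 1 := by
        rw [← hux]; simp
      set g : ZMod n := ((u⁻¹ : (ZMod n)ˣ) : ZMod n) with hg
      refine ⟨(g.val : ℤ), ?_, ?_⟩
      · rw [Nat.isCoprime_iff_coprime]
        exact ZMod.val_coe_unit_coprime _
      have hgc : (((g.val : ℕ) : ℤ) : ZMod n) = g := by simp
      rw [hgc]
      have hS : t.sum < n := by omega
      have hsl : g * l.sum = (t.sum : ZMod n) := by
        have h9 : l.sum = (t.map (· • x)).sum := by rw [← h1]; simp
        rw [h9, ← Multiset.sum_map_mul_left, Nat.cast_multiset_sum]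
        congr 1
        apply Multiset.map_congr rfl
        intro i _
        simp only [nsmul_eq_mul]
        rw [mul_left_comm, hinv, mul_one]
      have hl : (l.map (fun a => lpr n (g * a))).sum = t.sum := by
        have h10 : ((l : Multiset (ZMod n)).map (fun a => lpr n (g * a))).sum = t.sum := by
          rw [h1, Multiset.map_map]
          congr 1
          conv_rhs => rw [← Multiset.map_id t]
          apply Multiset.map_congr rfl
          intro i hi
          simp only [nsmul_eq_mul, Function.comp, id]
          rw [mul_left_comm, hinv, mul_one]
          exact lpr_nat i (h2 i hi) (lt_of_le_of_lt (Multiset.le_sum_of_mem hi) hS)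
        simpa using h10
      have ha : g * a = ((n - t.sum : ℕ) : ZMod n) := by
        rw [Nat.cast_sub hS.le, ← hsl, ZMod.natCast_self, zero_sub, ← mul_neg]
        congr 1
        rw [eq_neg_iff_add_eq_zero]
        simpa using hsum
      simp only [List.map_cons, List.sum_cons]
      rw [hl, ha, lpr_nat _ (by omega) (by simp only [List.length_cons] at hlen; omega)]
      omega
  apply le_antisymm
  · exact Nat.sInf_le hex
  · apply le_csInf ⟨n, hex⟩
    rintro m ⟨g, -, rfl⟩
    exact hge g
end

section
/- Let n and ℓ be integers with n/2 < ℓ < n. Every zero-free sequence of length ℓ in Z/nZ contains a term of multiplicity at least 2ℓ − n + 1. -/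
open Finset in
open scoped Pointwise in
/-- Scherk's theorem. -/
theorem scherk_aux {G : Type*} [AddCommGroup G] [Finite G] [DecidableEq G] (k : ℕ) :
    ∀ A B : Finset G, B.card = k → (0 : G) ∈ A → (0 : G) ∈ B →
      (∀ a ∈ A, ∀ b ∈ B, a + b = 0 → a = 0 ∧ b = 0) →
      A.card + B.card ≤ (A + B).card + 1 := by
  induction k using Nat.strong_induction_on with
  | _ k ih =>
    intro A B hk hA hB hu
    by_cases hsub : ∀ a ∈ A, ∀ b ∈ B, a + b ∈ A
    · have hB0 : B = {0} := by
        apply Finset.eq_singleton_iff_unique_mem.2 ⟨hB, ?_⟩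
        intro b hb
        have hm : ∀ m : ℕ, m • b ∈ A := by
          intro m
          induction m with
          | zero => simpa using hA
          | succ m ihm => rw [succ_nsmul]; exact hsub _ ihm _ hb
        have hpos : 0 < addOrderOf b := addOrderOf_pos b
        have h0 : (addOrderOf b - 1) • b + b = 0 := by
          rw [← succ_nsmul, Nat.sub_add_cancel hpos, addOrderOf_nsmul_eq_zero]
        exact (hu _ (hm _) _ hb h0).2
      subst hB0
      simp
    · push Not at hsub
      obtain ⟨a, ha, b, hb, hab⟩ := hsub
      have hcard := addDysonETransform.card a (A, B)
      have hss := addDysonETransform.subset a (A, B)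
      have hlt : (B ∩ (-a +ᵥ A)).card < B.card := by
        apply Finset.card_lt_card
        refine ⟨Finset.inter_subset_left, fun h => ?_⟩
        have := (Finset.mem_inter.1 (h hb)).2
        rw [Finset.mem_vadd_finset] at this
        obtain ⟨c, hc, hcb⟩ := this
        apply hab
        rw [← hcb]; simpa using hc
      have := ih _ (hk ▸ hlt) (A ∪ (a +ᵥ B)) (B ∩ (-a +ᵥ A)) rfl
        (Finset.mem_union_left _ hA)
        (Finset.mem_inter.2 ⟨hB, Finset.mem_vadd_finset.2 ⟨a, ha, by simp⟩⟩)
        (by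
          intro x hx y hy hxy
          rw [Finset.mem_inter, Finset.mem_vadd_finset] at hy
          obtain ⟨hyB, c, hc, rfl⟩ := hy
          rw [Finset.mem_union, Finset.mem_vadd_finset] at hx
          rcases hx with hx | ⟨d, hd, rfl⟩
          · exact hu _ hx _ hyB hxy
          · have h := hu c hc d hd (by
              simp only [vadd_eq_add] at hxy
              rw [← hxy]; abel)
            obtain ⟨rfl, rfl⟩ := h
            exact hu _ (by simpa using ha) _ hyB hxy)
      have h3 := Finset.card_le_card hss
      simp only [addDysonETransform] at hcard h3
      omega

/-- All subsums of a multiset, including the empty one. -/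
def SubSums {G : Type*} [AddCommGroup G] [DecidableEq G] (s : Multiset G) : Finset G :=
  (s.powerset.map Multiset.sum).toFinset

theorem mem_SubSums {G : Type*} [AddCommGroup G] [DecidableEq G] {s : Multiset G} {x : G} :
    x ∈ SubSums s ↔ ∃ t ≤ s, t.sum = x := by
  simp [SubSums]

/-- Zero-free multisets. -/
def MZF {G : Type*} [AddCommGroup G] (s : Multiset G) : Prop :=
  ∀ t ≤ s, t.sum = 0 → t = 0

open scoped Pointwise in
theorem SubSums_add {G : Type*} [AddCommGroup G] [Finite G] [DecidableEq G] {s t : Multiset G}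
    (h : MZF (s + t)) :
    (SubSums s).card + (SubSums t).card ≤ (SubSums (s + t)).card + 1 := by
  have h1 := scherk_aux _ (SubSums s) (SubSums t) rfl
    (mem_SubSums.2 ⟨0, by simp, by simp⟩) (mem_SubSums.2 ⟨0, by simp, by simp⟩)
    (by
      intro a ha b hb hab
      obtain ⟨u, hu, rfl⟩ := mem_SubSums.1 ha
      obtain ⟨v, hv, rfl⟩ := mem_SubSums.1 hb
      have := h (u + v) (add_le_add hu hv) (by simpa using hab)
      rw [add_eq_zero] at this
      obtain ⟨rfl, rfl⟩ := this
      simp)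
  have h2 : SubSums s + SubSums t ⊆ SubSums (s + t) := by
    intro x hx
    obtain ⟨a, ha, b, hb, rfl⟩ := Finset.mem_add.1 hx
    obtain ⟨u, hu, rfl⟩ := mem_SubSums.1 ha
    obtain ⟨v, hv, rfl⟩ := mem_SubSums.1 hb
    exact mem_SubSums.2 ⟨u + v, add_le_add hu hv, by simp⟩
  have := Finset.card_le_card h2
  omega

theorem card_two_nsmul {G : Type*} [AddCommGroup G] [Fintype G] [IsAddCyclic G] [DecidableEq G]
    (c : G) : (Finset.univ.filter (fun x : G => x + x = c)).card ≤ 2 := by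
  by_cases hne : (Finset.univ.filter (fun x : G => x + x = c)).Nonempty
  · obtain ⟨y, hy⟩ := hne
    simp only [Finset.mem_filter, Finset.mem_univ, true_and] at hy
    refine le_trans ?_ (IsAddCyclic.card_nsmul_eq_zero_le (α := G) (n := 2) (by norm_num))
    apply Finset.card_le_card_of_injOn (fun x => x - y)
    · intro x hx
      simp only [Finset.coe_filter, Finset.mem_univ, true_and, Set.mem_ofPred_eq] at hx ⊢
      rw [two_nsmul, sub_add_sub_comm, hx, hy, sub_self]
    · intro x _ z _ h
      simpa using h
  · rw [Finset.not_nonempty_iff_eq_empty.1 hne]; simp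

theorem SubSums_finset {G : Type*} [AddCommGroup G] [Fintype G] [IsAddCyclic G] [DecidableEq G]
    (T : Finset G) (h : MZF T.val) : 2 * T.card ≤ (SubSums T.val).card := by
  have hz : ∀ U ⊆ T, ∑ x ∈ U, x = 0 → U = ∅ := by
    intro U hU hs
    have := h U.val (Finset.val_le_iff.2 hU) ((Finset.sum_val U).trans hs)
    exact Finset.val_eq_zero.1 this
  have hm : ∀ U ⊆ T, ∑ x ∈ U, x ∈ SubSums T.val := by
    intro U hU
    exact mem_SubSums.2 ⟨U.val, Finset.val_le_iff.2 hU, Finset.sum_val U⟩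
  have hm0 : (0 : G) ∈ SubSums T.val := by simpa using hm ∅ (by simp)
  have hm1 : ∀ a ∈ T, a ∈ SubSums T.val := fun a ha => by
    simpa using hm {a} (by simpa using ha)
  have hne0 : ∀ a ∈ T, a ≠ 0 := fun a ha h0 => by
    simpa using hz {a} (by simpa using ha) (by simpa using h0)
  have hmσ := hm T subset_rfl
  rcases Nat.lt_or_ge T.card 3 with hlt | hge
  · interval_cases hc : T.card
    · simp
    · obtain ⟨a, rfl⟩ := Finset.card_eq_one.1 hc
      have ha := hne0 a (by simp)
      change 2 ≤ _
      rw [← Finset.card_pair (Ne.symm ha)]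
      apply Finset.card_le_card
      intro x hx
      simp only [Finset.mem_insert, Finset.mem_singleton] at hx
      rcases hx with rfl | rfl
      · exact hm0
      · exact hm1 _ (by simp)
    · obtain ⟨a, b, hab, rfl⟩ := Finset.card_eq_two.1 hc
      have ha := hne0 a (by simp)
      have hb := hne0 b (by simp)
      rw [Finset.sum_pair hab] at hmσ
      have hs : a + b ≠ 0 := fun h0 => by
        have := hz {a, b} subset_rfl (by rw [Finset.sum_pair hab]; exact h0)
        simp at this
      have h4 : ({0, a, b, a + b} : Finset G).card = 4 := by
        rw [Finset.card_insert_of_notMem, Finset.card_insert_of_notMem,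
          Finset.card_insert_of_notMem, Finset.card_singleton]
        · simpa using ha
        · simpa [hab] using hb
        · simp [ha.symm, hb.symm, hs.symm]
      change 4 ≤ _
      rw [← h4]
      apply Finset.card_le_card
      intro x hx
      simp only [Finset.mem_insert, Finset.mem_singleton] at hx
      rcases hx with rfl | rfl | rfl | rfl
      · exact hm0
      · exact hm1 _ (by simp)
      · exact hm1 _ (by simp)
      · exact hmσ
  · set σ := ∑ x ∈ T, x with hσ
    have hsd : ∀ U ⊆ T, U.card < 3 → ∑ x ∈ U, x ≠ σ := by
      intro U hU hc he
      have h1 := Finset.sum_sdiff (f := fun x : G => x) hU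
      have h2 : ∑ x ∈ T \ U, x = 0 := by
        rw [he, ← hσ] at h1
        simpa using h1
      have h3 := hz _ Finset.sdiff_subset h2
      have h4 := Finset.card_le_card (Finset.sdiff_eq_empty_iff_subset.1 h3)
      omega
    have hσ0 : σ ≠ 0 := fun h0 => hsd ∅ (by simp) (by simp) (by simp [h0])
    have hσ1 : ∀ a ∈ T, a ≠ σ := fun a ha he =>
      hsd {a} (by simpa using ha) (by simp) (by simpa using he)
    have hI : T ∩ T.image (fun x => σ - x) ⊆ Finset.univ.filter (fun x : G => x + x = σ) := by
      intro x hx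
      simp only [Finset.mem_inter, Finset.mem_image, Finset.mem_filter, Finset.mem_univ,
        true_and] at hx ⊢
      obtain ⟨hx, y, hy, hxy⟩ := hx
      have hs : x + y = σ := by rw [← hxy]; abel
      by_cases hne : x = y
      · subst hne; exact hs
      · exfalso
        refine hsd {x, y} ?_ (by rw [Finset.card_pair hne]; norm_num)
          (by rw [Finset.sum_pair hne]; exact hs)
        intro z hz
        simp only [Finset.mem_insert, Finset.mem_singleton] at hz
        rcases hz with rfl | rfl <;> assumption
    have hIc := (Finset.card_le_card hI).trans (card_two_nsmul σ)
    have hUc := Finset.card_union_add_card_inter T (T.image (fun x => σ - x))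
    rw [Finset.card_image_of_injective T (sub_right_injective)] at hUc
    have h5 : (insert 0 (insert σ (T ∪ T.image (fun x => σ - x)))).card
        = (T ∪ T.image (fun x => σ - x)).card + 2 := by
      rw [Finset.card_insert_of_notMem, Finset.card_insert_of_notMem]
      · simp only [Finset.mem_union, Finset.mem_image, not_or, not_exists, not_and]
        exact ⟨fun h => hσ1 _ h rfl, fun x hx he => hne0 x hx (by simpa using he)⟩
      · simp only [Finset.mem_insert, Finset.mem_union, Finset.mem_image, not_or, not_exists,
          not_and]
        exact ⟨hσ0.symm, fun h => hne0 _ h rfl,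
          fun x hx he => hσ1 x hx (sub_eq_zero.1 he).symm⟩
    have h6 : insert 0 (insert σ (T ∪ T.image (fun x => σ - x))) ⊆ SubSums T.val := by
      intro x hx
      simp only [Finset.mem_insert, Finset.mem_union, Finset.mem_image] at hx
      rcases hx with rfl | rfl | hx | ⟨y, hy, rfl⟩
      · exact hm0
      · exact hmσ
      · exact hm1 _ hx
      · have := hm (T.erase y) (Finset.erase_subset _ _)
        rwa [Finset.sum_erase_eq_sub hy] at this
    have h7 := Finset.card_le_card h6
    omega

theorem SubSums_main {G : Type*} [AddCommGroup G] [Fintype G] [IsAddCyclic G] [DecidableEq G]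
    (h : ℕ) : ∀ s : Multiset G, MZF s → (∀ a, s.count a ≤ h) →
      2 * s.card + 1 ≤ (SubSums s).card + h := by
  induction h with
  | zero =>
    intro s _ hc
    have : s = 0 := by
      apply Multiset.eq_zero_of_forall_notMem
      intro a ha
      have := Multiset.count_pos.2 ha
      have := hc a
      omega
    subst this
    simp [SubSums]
  | succ h ih =>
    intro s hs hc
    have hle : s.toFinset.val ≤ s := by
      rw [Multiset.toFinset_val]; exact Multiset.dedup_le s
    have heq : (s - s.toFinset.val) + s.toFinset.val = s := Multiset.sub_add_cancel hle
    have h1 := ih (s - s.toFinset.val) (fun t ht => hs t (ht.trans (Multiset.sub_le_self _ _)))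
      (by
        intro a
        rw [Multiset.count_sub, Multiset.toFinset_val, Multiset.count_dedup]
        have := hc a
        split_ifs with hm
        · omega
        · rw [Multiset.count_eq_zero_of_notMem hm]; omega)
    have h2 := SubSums_finset s.toFinset (fun t ht => hs t (ht.trans hle))
    have h3 := SubSums_add (s := s - s.toFinset.val) (t := s.toFinset.val) (by rwa [heq])
    have h4 := congrArg Multiset.card heq
    rw [heq] at h3
    rw [Multiset.card_add] at h4
    have h5 : Multiset.card s.toFinset.val = s.toFinset.card := rfl
    omega

theorem stmt14 (n ℓ : ℕ) (h1 : n < 2 * ℓ) (h2 : ℓ < n)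
    (α : List (ZMod n)) (hlen : α.length = ℓ) (hzf : ZeroFree α) :
    ∃ a ∈ α, 2 * ℓ - n + 1 ≤ α.count a := by
  have : NeZero n := ⟨by omega⟩
  by_contra hcon
  push Not at hcon
  have hm : MZF (α : Multiset (ZMod n)) := by
    intro t ht hs
    induction t using Quotient.inductionOn with
    | _ t =>
      obtain ⟨t', hp, hsub⟩ := Multiset.coe_le.1 ht
      by_contra hne
      apply hzf t' hsub
      · rintro rfl
        apply hne
        simp [List.nil_perm.1 hp]
      · rw [hp.sum_eq]; simpa using hs
  have := SubSums_main (2 * ℓ - n) (α : Multiset (ZMod n)) hm (by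
    intro a
    rw [Multiset.coe_count]
    by_cases ha : a ∈ α
    · have := hcon a ha
      omega
    · rw [List.count_eq_zero_of_not_mem ha]; omega)
  have hle := Finset.card_le_univ (SubSums (α : Multiset (ZMod n)))
  rw [ZMod.card] at hle
  rw [Multiset.coe_card] at this
  omega
end
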